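/- In ℝ⁵ with the standard Euclidean inner product, let S be the set of six vectors (-2/3,4/3,-2/3,1/2,-1/2), (-2/3,1/3,1/3,1/2,-1/2), (-2/3,-2/3,4/3,1/2,-1/2), (-2/3,4/3,-2/3,-1/2,1/2), (-2/3,1/3,1/3,-1/2,1/2), (-2/3,-2/3,4/3,-1/2,1/2). Then the minimum of ‖x‖² over x in the convex hull of S equals 2/3, and it is attained at the point β₁₀ = (-2/3,1/3,1/3,0,0). -/

import Mathlib

/-- A vector in `ℝ⁵` with the standard Euclidean inner product. -/
noncomputable def vec5 (a b c d e : ℝ) : EuclideanSpace ℝ (Fin 5) :=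
  (WithLp.equiv 2 (Fin 5 → ℝ)).symm ![a, b, c, d, e]

/-- Table (2.3) for `(GL(3)×GL(2), Sym²k³⊗k²)`: the minimum of `‖x‖²` over the
convex hull of the listed weight vectors equals `2/3`, attained at
`β₁₀ = ((-2/3) (1/3) (1/3) 0 0)`. -/
theorem minsq_of_convexHull_weights :
    let S : Set (EuclideanSpace ℝ (Fin 5)) :=
      {vec5 (-2/3) (4/3) (-2/3) (1/2) (-1/2),
       vec5 (-2/3) (1/3) (1/3) (1/2) (-1/2),
       vec5 (-2/3) (-2/3) (4/3) (1/2) (-1/2),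
       vec5 (-2/3) (4/3) (-2/3) (-1/2) (1/2),
       vec5 (-2/3) (1/3) (1/3) (-1/2) (1/2),
       vec5 (-2/3) (-2/3) (4/3) (-1/2) (1/2)}
    let β : EuclideanSpace ℝ (Fin 5) := vec5 (-2/3) (1/3) (1/3) 0 0
    β ∈ convexHull ℝ S ∧ ‖β‖ ^ 2 = 2/3 ∧
      ∀ x ∈ convexHull ℝ S, (2/3 : ℝ) ≤ ‖x‖ ^ 2 := by
  intro S β
  refine ⟨?_, ?_, ?_⟩
  · have h2 : vec5 (-2/3) (1/3) (1/3) (1/2) (-1/2) ∈ convexHull ℝ S :=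
      subset_convexHull ℝ S (by simp [S])
    have h5 : vec5 (-2/3) (1/3) (1/3) (-1/2) (1/2) ∈ convexHull ℝ S :=
      subset_convexHull ℝ S (by simp [S])
    have h := convex_convexHull ℝ S h2 h5 (a := 1/2) (b := 1/2)
      (by norm_num) (by norm_num) (by norm_num)
    convert h using 1
    ext i
    fin_cases i <;> simp [β, vec5] <;> norm_num
  · rw [EuclideanSpace.norm_sq_eq]
    simp [β, vec5, Fin.sum_univ_five]
    norm_num
  · have hsub : convexHull ℝ S ⊆
        {x : EuclideanSpace ℝ (Fin 5) | x 0 = -2/3 ∧ x 1 + x 2 = 2/3} := by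
      apply convexHull_min
      · intro x hx
        simp only [S, Set.mem_insert_iff, Set.mem_singleton_iff] at hx
        rcases hx with rfl | rfl | rfl | rfl | rfl | rfl <;>
          simp [vec5] <;> norm_num
      · rintro x ⟨hx0, hx1⟩ y ⟨hy0, hy1⟩ a b _ _ hab
        simp only [Set.mem_setOf_eq, PiLp.add_apply, PiLp.smul_apply, smul_eq_mul]
        constructor
        · rw [hx0, hy0]
          linear_combination (-2/3) * hab
        · linear_combination a * hx1 + b * hy1 + (2/3) * hab
    intro x hx
    obtain ⟨h0, h1⟩ := hsub hx
    rw [EuclideanSpace.norm_sq_eq]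
    simp only [Fin.sum_univ_five, Real.norm_eq_abs, sq_abs]
    have h2 : x 2 = 2/3 - x 1 := by linarith
    rw [h0, h2]
    nlinarith [sq_nonneg (x 1 - 1/3), sq_nonneg (x 3), sq_nonneg (x 4)]
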